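/- arXiv:1907.04280 — 2 statements merged into one kernel-verified Lean document; each statement's English description precedes it below -/
import Mathlib

section
/- Classical Christoffel formula: let r_1, …, r_N ∈ ℝ be pairwise distinct, set W(x) := (x − r_1)⋯(x − r_N), and fix n ≥ 0 such that the N×N matrix with entries P_{n+i}(r_j) (0 ≤ i ≤ N−1, 1 ≤ j ≤ N) has nonzero determinant. Define P̂_n(x) := (1/(W(x)·D_n)) · det A_n(x), where D_n := det (P_{n+i}(r_j))_{0 ≤ i ≤ N−1, 1 ≤ j ≤ N} and A_n(x) is the (N+1)×(N+1) matrix whose row i (0 ≤ i ≤ N) is (P_{n+i}(r_1), …, P_{n+i}(r_N), P_{n+i}(x)). Then P̂_n is a monic polynomial of degree n satisfying ∫ P̂_n(x)·x^l·W(x) dμ(x) = 0 for all 0 ≤ l < n; i.e., P̂_n is the n-th monic orthogonal polynomial for the Christoffel-perturbed measure dμ̂ = W(x) dμ(x). -/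
/-!
Expanding `det A_n(x)` along its last column writes it as `Q(x)`, where
`Q = ∑ i, c i • P (n + i)` has coefficients `c i` (signed minors) that do not depend on `x`, and
the last of them is `D_n`. Three consequences give the theorem. Since the degrees of the
`P (n + i)` increase, `Q / D_n` is monic of degree `n + N`. At `x = r_j` two columns of `A_n(x)`
coincide, so `Q` vanishes at the distinct points `r_j` and `W ∣ Q` (`W_dvd_of_roots`); the quotient
`Q / (D_n W)` is therefore a monic polynomial of degree `n`, and it is `P̂_n`. Finally
`P̂_n W = Q / D_n` is a combination of `P_n, …, P_{n+N}`, each of which is orthogonal to `x ^ l`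
for `l < n`.
-/

open MeasureTheory Polynomial

theorem integrable_polynomial_eval {μ : Measure ℝ}
    (hmom : ∀ j : ℕ, Integrable (fun x : ℝ => x ^ j) μ) (p : Polynomial ℝ) :
    Integrable (fun x : ℝ => p.eval x) μ := by
  simp only [Polynomial.eval_eq_sum_range]
  exact integrable_finsetSum _ fun i _ => (hmom i).const_mul _

theorem W_dvd_of_roots {N : ℕ} {r : Fin N → ℝ} (hr : Function.Injective r) {Q : Polynomial ℝ}
    (hQ : ∀ j, Q.eval (r j) = 0) :
    (∏ j : Fin N, (Polynomial.X - Polynomial.C (r j))) ∣ Q := by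
  refine Fintype.prod_dvd_of_coprime (Polynomial.pairwise_coprime_X_sub_C hr) fun j => ?_
  exact Polynomial.dvd_iff_isRoot.2 (hQ j)

/-- The matrix `A_n(x)` with rows `(P_{n+i}(r_1), …, P_{n+i}(r_N), P_{n+i}(x))`. -/
noncomputable def christoffelMatrix (P : ℕ → Polynomial ℝ) {N : ℕ} (r : Fin N → ℝ) (n : ℕ)
    (x : ℝ) : Matrix (Fin (N + 1)) (Fin (N + 1)) ℝ :=
  Matrix.of fun i j : Fin (N + 1) =>
    if h : (j : ℕ) < N then (P (n + (i : ℕ))).eval (r ⟨(j : ℕ), h⟩)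
    else (P (n + (i : ℕ))).eval x

/-- The cofactor of the entry of `A_n(x)` in row `i` of the last column; it does not involve `x`. -/
noncomputable def christoffelCofactor (P : ℕ → Polynomial ℝ) {N : ℕ} (r : Fin N → ℝ) (n : ℕ)
    (i : Fin (N + 1)) : ℝ :=
  (-1) ^ ((i : ℕ) + N) *
    (Matrix.of fun k j : Fin N => (P (n + (i.succAbove k : ℕ))).eval (r j)).det

theorem christoffelCofactor_last (P : ℕ → Polynomial ℝ) {N : ℕ} (r : Fin N → ℝ) (n : ℕ) :
    christoffelCofactor P r n (Fin.last N) =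
      (Matrix.of fun i j : Fin N => (P (n + (i : ℕ))).eval (r j)).det := by
  simp [christoffelCofactor, ← two_mul]

/-- Laplace expansion of `det A_n(x)` along its last column. -/
theorem det_christoffelMatrix (P : ℕ → Polynomial ℝ) {N : ℕ} (r : Fin N → ℝ) (n : ℕ) (x : ℝ) :
    (christoffelMatrix P r n x).det =
      ∑ i : Fin (N + 1), christoffelCofactor P r n i * (P (n + (i : ℕ))).eval x := by
  rw [Matrix.det_succ_column _ (Fin.last N)]
  refine Finset.sum_congr rfl fun i _ => ?_
  have hsub : (christoffelMatrix P r n x).submatrix i.succAbove (Fin.last N).succAbove =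
      Matrix.of fun k j : Fin N => (P (n + (i.succAbove k : ℕ))).eval (r j) := by
    ext k j
    simp [christoffelMatrix]
  rw [hsub]
  simp only [christoffelMatrix, christoffelCofactor, Matrix.of_apply, Fin.val_last, lt_irrefl,
    dite_false]
  ring

theorem det_christoffelMatrix_node (P : ℕ → Polynomial ℝ) {N : ℕ} (r : Fin N → ℝ) (n : ℕ)
    (j : Fin N) : (christoffelMatrix P r n (r j)).det = 0 := by
  refine Matrix.det_zero_of_column_eq (i := j.castSucc) (j := Fin.last N)
    (Fin.castSucc_lt_last j).ne fun k => ?_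
  simp [christoffelMatrix]

/-- A combination of `P_n, …, P_{n+N}` with top coefficient `1` is monic of degree `n + N`. -/
theorem monic_sum_of_last {P : ℕ → Polynomial ℝ}
    (hmonic : ∀ n, (P n).Monic) (hdeg : ∀ n, (P n).natDegree = n) {N : ℕ} (n : ℕ)
    (a : Fin (N + 1) → ℝ) (ha : a (Fin.last N) = 1) :
    (∑ i, Polynomial.C (a i) * P (n + (i : ℕ))).Monic ∧
      (∑ i, Polynomial.C (a i) * P (n + (i : ℕ))).natDegree = n + N := by
  have hd : ∀ k, (P k).degree = (k : ℕ) := fun k => by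
    rw [Polynomial.degree_eq_natDegree (hmonic k).ne_zero, hdeg]
  rw [Fin.sum_univ_castSucc, ha]
  simp only [Fin.val_castSucc, Fin.val_last, Polynomial.C_1, one_mul]
  have hlt : (∑ i : Fin N, Polynomial.C (a i.castSucc) * P (n + (i : ℕ))).degree <
      (P (n + N)).degree := by
    rw [hd, ← Polynomial.mem_degreeLT]
    refine Submodule.sum_mem _ fun i _ => ?_
    rw [← Polynomial.smul_eq_C_mul]
    refine Submodule.smul_mem _ _ ?_
    rw [Polynomial.mem_degreeLT, hd]
    exact_mod_cast Nat.add_lt_add_left i.2 n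
  refine ⟨(hmonic _).add_of_right hlt, ?_⟩
  rw [Polynomial.natDegree_eq_of_degree_eq (Polynomial.degree_add_eq_right_of_degree_lt hlt), hdeg]

/-- Classical Christoffel formula: for pairwise distinct `r_1, …, r_N`,
`W(x) = (x − r_1)⋯(x − r_N)` and `n` such that `D_n = det (P_{n+i}(r_j)) ≠ 0`, the function
`P̂_n(x) = det A_n(x) / (W(x)·D_n)` is a monic polynomial of degree `n` orthogonal with
respect to the Christoffel-perturbed measure `W(x) dμ(x)`. -/
theorem stmt_17 (μ : Measure ℝ)
    (hmom : ∀ j : ℕ, Integrable (fun x : ℝ => x ^ j) μ)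
    (P : ℕ → Polynomial ℝ)
    (hmonic : ∀ n, (P n).Monic) (hdeg : ∀ n, (P n).natDegree = n)
    (horth : ∀ n l : ℕ, l < n → ∫ x, (P n).eval x * x ^ l ∂μ = 0)
    (H : ℕ → ℝ) (hH : ∀ n, H n = ∫ x, ((P n).eval x) ^ 2 ∂μ)
    (hHpos : ∀ n, 0 < H n)
    (N : ℕ) (r : Fin N → ℝ) (hr : Function.Injective r)
    (W : Polynomial ℝ) (hW : W = ∏ j : Fin N, (Polynomial.X - Polynomial.C (r j)))
    (n : ℕ)
    (hD : (Matrix.of fun i j : Fin N => (P (n + (i : ℕ))).eval (r j)).det ≠ 0) :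
    ∃ Phat : Polynomial ℝ,
      Phat.Monic ∧ Phat.natDegree = n ∧
      (∀ x : ℝ,
        W.eval x * (Matrix.of fun i j : Fin N => (P (n + (i : ℕ))).eval (r j)).det *
            Phat.eval x =
          (Matrix.of fun i j : Fin (N + 1) =>
            if h : (j : ℕ) < N then (P (n + (i : ℕ))).eval (r ⟨(j : ℕ), h⟩)
            else (P (n + (i : ℕ))).eval x).det) ∧
      (∀ l : ℕ, l < n → ∫ x, Phat.eval x * x ^ l * W.eval x ∂μ = 0) := by
  set D := (Matrix.of fun i j : Fin N => (P (n + (i : ℕ))).eval (r j)).det with hDdef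
  set a : Fin (N + 1) → ℝ := fun i => D⁻¹ * christoffelCofactor P r n i with ha
  have hlast : a (Fin.last N) = 1 := by
    simp only [ha, christoffelCofactor_last]
    exact inv_mul_cancel₀ hD
  obtain ⟨hSmonic, hSdeg⟩ := monic_sum_of_last hmonic hdeg n a hlast
  set S : Polynomial ℝ := ∑ i, Polynomial.C (a i) * P (n + (i : ℕ)) with hS
  have hSeval' : ∀ x, S.eval x = ∑ i, a i * (P (n + (i : ℕ))).eval x := fun x => by
    simp [hS, Polynomial.eval_finsetSum]
  have hSeval : ∀ x, S.eval x = D⁻¹ * (christoffelMatrix P r n x).det := fun x => by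
    rw [hSeval', det_christoffelMatrix, Finset.mul_sum]
    exact Finset.sum_congr rfl fun i _ => mul_assoc _ _ _
  obtain ⟨Phat, hPhat⟩ : W ∣ S := hW ▸ W_dvd_of_roots hr fun j => by
    rw [hSeval, det_christoffelMatrix_node, mul_zero]
  have hWmonic : W.Monic := hW ▸ Polynomial.monic_prod_X_sub_C _ _
  have hWdeg : W.natDegree = N := by
    rw [hW, Polynomial.natDegree_finsetProd_X_sub_C_eq_card, Finset.card_fin]
  have hPmonic : Phat.Monic := hWmonic.of_mul_monic_left (hPhat ▸ hSmonic)
  have hmul : ∀ x, W.eval x * Phat.eval x = S.eval x := fun x => by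
    rw [hPhat, Polynomial.eval_mul]
  refine ⟨Phat, hPmonic, ?_, fun x => ?_, fun l hl => ?_⟩
  · have h := hWmonic.natDegree_mul hPmonic
    rw [← hPhat, hSdeg, hWdeg] at h
    omega
  · change _ = (christoffelMatrix P r n x).det
    rw [mul_right_comm, hmul, hSeval, mul_right_comm, inv_mul_cancel₀ hD, one_mul]
  · have hint : ∀ x, Phat.eval x * x ^ l * W.eval x =
        ∑ i : Fin (N + 1), a i * ((P (n + (i : ℕ))).eval x * x ^ l) := fun x => by
      rw [mul_right_comm, mul_comm (Phat.eval x), hmul, hSeval', Finset.sum_mul]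
      exact Finset.sum_congr rfl fun i _ => mul_assoc _ _ _
    simp only [hint]
    rw [integral_finsetSum]
    · refine Finset.sum_eq_zero fun i _ => ?_
      rw [integral_const_mul, horth _ _ (by omega), mul_zero]
    · intro i _
      refine Integrable.const_mul ?_ _
      have h := integrable_polynomial_eval hmom (P (n + (i : ℕ)) * Polynomial.X ^ l)
      simp only [Polynomial.eval_mul, Polynomial.eval_pow, Polynomial.eval_X] at h
      exact h
end

section
/- Geronimus transformation by a degree-one factor: let a ∈ ℝ ∖ supp μ and ξ ∈ ℝ. Set C_n(a) := ∫ P_n(x)/(a − x) dμ(x), and assume C_{n−1}(a) − ξ·P_{n−1}(a) ≠ 0 for the relevant n. Define P̌_0 := 1 and, for n ≥ 1, P̌_n(x) := P_n(x) − ((C_n(a) − ξ·P_n(a))/(C_{n−1}(a) − ξ·P_{n−1}(a)))·P_{n−1}(x). Then for every n ≥ 1: (i) P̌_n is a monic polynomial of degree n satisfying, for all 0 ≤ l < n, ∫ P̌_n(x)·x^l/(x − a) dμ(x) + ξ·P̌_n(a)·a^l = 0 (orthogonality with respect to the Geronimus-transformed bilinear form); and (ii) Ȟ_n := ∫ P̌_n(x)·x^n/(x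 − a) dμ(x) + ξ·P̌_n(a)·a^n = −((C_n(a) − ξ·P_n(a))/(C_{n−1}(a) − ξ·P_{n−1}(a)))·H_{n−1}. -/
/-!
Write `I(F) = ∫ F/(x - a) dμ + ξ F(a)`. The telescoping identity
`x^l - a^l = (x - a) ∑_{i<l} x^i a^(l-1-i)` gives, for every polynomial `Q`,
`I(Q x^l) = ∑_{i<l} a^(l-1-i) ∫ Q x^i dμ + a^l I(Q)` (`geronimus_mul_pow`).
For `Q = P_n - c P_{n-1}` the coefficient `c` is exactly the one for which `I(Q) = 0`. The moments
`∫ Q x^i dμ` vanish for `i < n - 1`, and the one with `i = n - 1` equals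
`-c ∫ P_{n-1} x^(n-1) dμ = -c H_{n-1}` (`integral_monic_mul_pow`).
All the Cauchy-type integrals converge, since `1/(x - a)` is `μ`-essentially bounded when `a` lies
outside the support (`integrable_eval_div`).
-/

open MeasureTheory Polynomial

/-- The support of a Borel measure on `ℝ`: the set of points all of whose neighborhoods
have positive measure. -/
def measSupport (μ : MeasureTheory.Measure ℝ) : Set ℝ :=
  {x : ℝ | ∀ U ∈ nhds x, μ U ≠ 0}

theorem integrable_eval {μ : Measure ℝ} (hmom : ∀ j : ℕ, Integrable (fun x : ℝ => x ^ j) μ)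
    (Q : Polynomial ℝ) : Integrable (fun x => Q.eval x) μ := by
  simp only [Polynomial.eval_eq_sum_range]
  exact integrable_finsetSum _ fun i _ => (hmom i).const_mul _

theorem exists_ae_le_abs_sub {μ : Measure ℝ} {a : ℝ} (ha : a ∉ measSupport μ) :
    ∃ r : ℝ, 0 < r ∧ ∀ᵐ x ∂μ, r ≤ |x - a| := by
  simp only [measSupport, Set.mem_ofPred_eq, not_forall, not_not] at ha
  obtain ⟨U, hU, h0⟩ := ha
  obtain ⟨r, hr, hrU⟩ := Metric.mem_nhds_iff.1 hU
  refine ⟨r, hr, measure_mono_null (fun x hx => hrU ?_) h0⟩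
  simpa [Real.dist_eq] using hx

theorem integrable_eval_div {μ : Measure ℝ} (hmom : ∀ j : ℕ, Integrable (fun x : ℝ => x ^ j) μ)
    {a : ℝ} (ha : a ∉ measSupport μ) (Q : Polynomial ℝ) :
    Integrable (fun x => Q.eval x / (x - a)) μ := by
  obtain ⟨r, hr, hae⟩ := exists_ae_le_abs_sub ha
  simp only [div_eq_mul_inv]
  refine (integrable_eval hmom Q).mul_bdd (c := r⁻¹) ?_ ?_
  · exact (measurable_id.sub_const a).inv.aestronglyMeasurable
  · filter_upwards [hae] with x hx
    rw [norm_inv, Real.norm_eq_abs]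
    exact inv_anti₀ hr hx

theorem integrable_eval_mul_pow {μ : Measure ℝ}
    (hmom : ∀ j : ℕ, Integrable (fun x : ℝ => x ^ j) μ) (Q : Polynomial ℝ) (i : ℕ) :
    Integrable (fun x => Q.eval x * x ^ i) μ := by
  have h := integrable_eval hmom (Q * X ^ i)
  simp only [eval_mul, eval_pow, eval_X] at h
  exact h

/-- Multiplication by `x ^ l` in the Geronimus functional costs only ordinary moments of order
less than `l`. -/
theorem geronimus_mul_pow {μ : Measure ℝ} (hmom : ∀ j : ℕ, Integrable (fun x : ℝ => x ^ j) μ)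
    {a : ℝ} (ha : a ∉ measSupport μ) (ξ : ℝ) (Q : Polynomial ℝ) (l : ℕ) :
    (∫ x, Q.eval x * x ^ l / (x - a) ∂μ) + ξ * Q.eval a * a ^ l =
      ∑ i ∈ Finset.range l, a ^ (l - 1 - i) * ∫ x, Q.eval x * x ^ i ∂μ +
        a ^ l * ((∫ x, Q.eval x / (x - a) ∂μ) + ξ * Q.eval a) := by
  obtain ⟨r, hr, hae⟩ := exists_ae_le_abs_sub ha
  have hpt : ∀ᵐ x ∂μ, Q.eval x * x ^ l / (x - a) =
      (∑ i ∈ Finset.range l, a ^ (l - 1 - i) * (Q.eval x * x ^ i)) +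
        a ^ l * (Q.eval x / (x - a)) := by
    filter_upwards [hae] with x hx
    have hxa : x - a ≠ 0 := abs_pos.1 (hr.trans_le hx)
    have hg := (Commute.all x a).geom_sum₂_mul l
    have hs : (∑ i ∈ Finset.range l, a ^ (l - 1 - i) * (Q.eval x * x ^ i)) =
        Q.eval x * ∑ i ∈ Finset.range l, x ^ i * a ^ (l - 1 - i) := by
      rw [Finset.mul_sum]
      exact Finset.sum_congr rfl fun i _ => by ring
    rw [hs]
    field_simp
    linear_combination (-Q.eval x) * hg
  have hint : ∀ i ∈ Finset.range l,
      Integrable (fun x => a ^ (l - 1 - i) * (Q.eval x * x ^ i)) μ :=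
    fun i _ => (integrable_eval_mul_pow hmom Q i).const_mul _
  rw [integral_congr_ae hpt, integral_add (integrable_finsetSum _ hint)
    ((integrable_eval_div hmom ha Q).const_mul _), integral_finsetSum _ hint]
  simp only [integral_const_mul]
  ring

/-- If `Q` is monic of degree `n` and orthogonal to all lower powers, its moment of order `n` is
its squared norm. -/
theorem integral_monic_mul_pow {μ : Measure ℝ}
    (hmom : ∀ j : ℕ, Integrable (fun x : ℝ => x ^ j) μ) {Q : Polynomial ℝ} (hQ : Q.Monic)
    (horth : ∀ l < Q.natDegree, ∫ x, Q.eval x * x ^ l ∂μ = 0) :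
    ∫ x, Q.eval x * x ^ Q.natDegree ∂μ = ∫ x, (Q.eval x) ^ 2 ∂μ := by
  have hpt : ∀ x : ℝ, (Q.eval x) ^ 2 =
      ∑ i ∈ Finset.range (Q.natDegree + 1), Q.coeff i * (Q.eval x * x ^ i) := by
    intro x
    rw [sq]
    nth_rewrite 2 [Polynomial.eval_eq_sum_range]
    rw [Finset.mul_sum]
    exact Finset.sum_congr rfl fun i _ => by ring
  simp only [hpt]
  rw [integral_finsetSum _ fun i _ => (integrable_eval_mul_pow hmom Q i).const_mul _]
  simp only [integral_const_mul]
  rw [Finset.sum_range_succ, Finset.sum_eq_zero fun i hi => by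
    rw [horth i (Finset.mem_range.1 hi), mul_zero], hQ.coeff_natDegree]
  ring

/-- Geronimus transformation by the degree-one factor `x − a` with free parameter `ξ`:
with `C_n(a) = ∫ P_n(x)/(a−x) dμ(x)` and assuming `C_n(a) − ξ·P_n(a) ≠ 0`, the polynomials
`P̌_n = P_n − ((C_n(a) − ξP_n(a))/(C_{n−1}(a) − ξP_{n−1}(a)))·P_{n−1}` are monic of degree
`n`, orthogonal with respect to the bilinear form
`⟨P,Q⟩ˇ = ∫ P(x)Q(x)/(x−a) dμ(x) + ξ·P(a)·Q(a)`, with squared norms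
`Ȟ_n = −((C_n(a) − ξP_n(a))/(C_{n−1}(a) − ξP_{n−1}(a)))·H_{n−1}`. -/
theorem stmt_18 (μ : Measure ℝ)
    (hmom : ∀ j : ℕ, Integrable (fun x : ℝ => x ^ j) μ)
    (P : ℕ → Polynomial ℝ)
    (hmonic : ∀ n, (P n).Monic) (hdeg : ∀ n, (P n).natDegree = n)
    (horth : ∀ n l : ℕ, l < n → ∫ x, (P n).eval x * x ^ l ∂μ = 0)
    (H : ℕ → ℝ) (hH : ∀ n, H n = ∫ x, ((P n).eval x) ^ 2 ∂μ)
    (hHpos : ∀ n, 0 < H n)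
    (a : ℝ) (haSupp : a ∉ measSupport μ) (ξ : ℝ)
    (hne : ∀ n : ℕ, (∫ x, (P n).eval x / (a - x) ∂μ) - ξ * (P n).eval a ≠ 0) :
    ∀ n : ℕ, 1 ≤ n →
      ∀ c : ℝ,
        c = ((∫ x, (P n).eval x / (a - x) ∂μ) - ξ * (P n).eval a) /
            ((∫ x, (P (n - 1)).eval x / (a - x) ∂μ) - ξ * (P (n - 1)).eval a) →
      ∀ Pc : Polynomial ℝ, Pc = P n - Polynomial.C c * P (n - 1) →
        Pc.Monic ∧ Pc.natDegree = n ∧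
        (∀ l : ℕ, l < n →
          (∫ x, Pc.eval x * x ^ l / (x - a) ∂μ) + ξ * Pc.eval a * a ^ l = 0) ∧
        (∫ x, Pc.eval x * x ^ n / (x - a) ∂μ) + ξ * Pc.eval a * a ^ n =
          -c * H (n - 1) := by
  intro n hn c hc Pc hPc
  obtain ⟨m, rfl⟩ : ∃ m, n = m + 1 := ⟨n - 1, by omega⟩
  simp only [Nat.add_sub_cancel] at hc hPc ⊢
  have hlt : (C c * P m).degree < (P (m + 1)).degree := by
    refine degree_lt_degree ((natDegree_C_mul_le c (P m)).trans_lt ?_)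
    rw [hdeg, hdeg]
    exact m.lt_succ_self
  have hmom' : ∀ i, ∫ x, Pc.eval x * x ^ i ∂μ =
      (∫ x, (P (m + 1)).eval x * x ^ i ∂μ) - c * ∫ x, (P m).eval x * x ^ i ∂μ := by
    intro i
    rw [← integral_const_mul, ← integral_sub (integrable_eval_mul_pow hmom _ i)
      ((integrable_eval_mul_pow hmom _ i).const_mul c)]
    congr 1
    ext x
    simp only [hPc, eval_sub, eval_mul, eval_C]
    ring
  have hC : ∀ k, ∫ x, (P k).eval x / (a - x) ∂μ = -∫ x, (P k).eval x / (x - a) ∂μ := by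
    intro k
    rw [← integral_neg]
    congr 1
    ext x
    rw [← div_neg, neg_sub]
  have hzero : (∫ x, Pc.eval x / (x - a) ∂μ) + ξ * Pc.eval a = 0 := by
    have hsplit : ∫ x, Pc.eval x / (x - a) ∂μ =
        (∫ x, (P (m + 1)).eval x / (x - a) ∂μ) - c * ∫ x, (P m).eval x / (x - a) ∂μ := by
      rw [← integral_const_mul, ← integral_sub (integrable_eval_div hmom haSupp _)
        ((integrable_eval_div hmom haSupp _).const_mul c)]
      congr 1
      ext x
      simp only [hPc, eval_sub, eval_mul, eval_C]
      ring
    rw [eq_div_iff (hne m), hC, hC] at hc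
    rw [hsplit, hPc]
    simp only [eval_sub, eval_mul, eval_C]
    linear_combination hc
  have hlow : ∀ i < m, ∫ x, Pc.eval x * x ^ i ∂μ = 0 := by
    intro i hi
    rw [hmom', horth _ _ (hi.trans m.lt_succ_self), horth _ _ hi]
    ring
  have htop : ∫ x, Pc.eval x * x ^ m ∂μ = -c * H m := by
    have h := integral_monic_mul_pow hmom (hmonic m) (by rw [hdeg]; exact horth m)
    rw [hdeg] at h
    rw [hmom', horth _ _ m.lt_succ_self, h, hH]
    ring
  refine ⟨?_, ?_, ?_, ?_⟩
  · rw [hPc]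
    exact (hmonic _).sub_of_left hlt
  · rw [hPc, natDegree_eq_of_degree_eq (degree_sub_eq_left_of_degree_lt hlt), hdeg]
  · intro l hl
    rw [geronimus_mul_pow hmom haSupp, hzero, Finset.sum_eq_zero fun i hi => ?_]
    · ring
    · rw [hlow i (by have := Finset.mem_range.1 hi; omega), mul_zero]
  · rw [geronimus_mul_pow hmom haSupp, hzero, Finset.sum_range_succ,
      Finset.sum_eq_zero fun i hi => by rw [hlow i (Finset.mem_range.1 hi), mul_zero], htop]
    simp
end
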